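/- Let (H,α) be a Hom-bialgebra and (B,β) a finite-dimensional Hom-bialgebra over k. Let A=B*⊗H be the Hom-algebra with multiplication (p⊗h)(q⊗g)=(q∗p)⊗hg, where (q∗p)(y)=q(β⁻²(y₁))p(β⁻²(y₂)) for y∈B, unit ε_B⊗1_H, and automorphism γ(p⊗h)=(p∘β⁻¹)⊗α(h). Let (M,·,ρ,μ) be an (H,B)-Hom-Long dimodule. Define (p⊗h)⇁m=p(m₋₁)·(h·μ⁻¹(m₀)) for p∈B*, h∈H, m∈M. Then (M,⇁,μ) is a left (A,γ)-Hom-module. -/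

import Mathlib

/-!
Write `h · m` for the `H`-action and `m₋₁ ⊗ m₀` for the `B`-coaction on `M`.  The formula
`(p ⊗ h) ⇁ m = p(m₋₁) (h · μ⁻¹(m₀))` is bilinear in `(p, h)`, so it defines a linear action of
`B* ⊗ H` (`dualTensorAct`), and each Hom-module axiom needs checking on pure tensors only.

* Compatibility with `μ` follows from `ρ ∘ μ = (β ⊗ μ) ∘ ρ`.
* The unit axiom follows from `1 · μ⁻¹(m) = m` and the counit axiom of the coaction.
* For Hom-associativity, the Long condition together with `ρ ∘ μ⁻¹ = (β⁻¹ ⊗ μ⁻¹) ∘ ρ` gives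
  `ρ(g · μ⁻¹(n)) = n₋₁ ⊗ α(g) · μ⁻¹(n₀)`.  Hence both sides are values of the functional
  `b ⊗ (b' ⊗ n) ↦ q(β⁻¹(b)) p(β⁻¹(b')) (hg · μ⁻¹(n))`: the left side at
  `β(m₋₁) ⊗ ρ(m₀)`, the right side at `Δ(m₋₁) ⊗ μ(m₀)`.  These two tensors agree by
  Hom-coassociativity of the coaction.
-/

open TensorProduct

/-- A Hom-bialgebra `(H, α)` over a field `k`. -/
structure HomBialgebra (k : Type*) [Field k] (H : Type*) [AddCommGroup H] [Module k H] where
  mul : H →ₗ[k] H →ₗ[k] H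
  one : H
  comul : H →ₗ[k] H ⊗[k] H
  counit : H →ₗ[k] k
  auto : H ≃ₗ[k] H
  auto_mul : ∀ h h' : H, auto (mul h h') = mul (auto h) (auto h')
  auto_one : auto one = one
  hom_assoc : ∀ h h' h'' : H, mul (auto h) (mul h' h'') = mul (mul h h') (auto h'')
  mul_one' : ∀ h : H, mul h one = auto h
  one_mul' : ∀ h : H, mul one h = auto h
  comul_auto : ∀ h : H,
    comul (auto h) = TensorProduct.map auto.toLinearMap auto.toLinearMap (comul h)
  counit_auto : ∀ h : H, counit (auto h) = counit h
  hom_coassoc : ∀ h : H,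
    TensorProduct.map auto.toLinearMap comul (comul h)
      = TensorProduct.assoc k H H H (TensorProduct.map comul auto.toLinearMap (comul h))
  counit_comul : ∀ h : H,
    TensorProduct.lid k H (TensorProduct.map counit (LinearMap.id : H →ₗ[k] H) (comul h)) = auto h
  comul_counit : ∀ h : H,
    TensorProduct.rid k H (TensorProduct.map (LinearMap.id : H →ₗ[k] H) counit (comul h)) = auto h
  comul_mul : ∀ h h' : H,
    comul (mul h h')
      = TensorProduct.map (TensorProduct.lift mul) (TensorProduct.lift mul)
          (TensorProduct.tensorTensorTensorComm k H H H H (comul h ⊗ₜ[k] comul h'))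
  comul_one : comul one = one ⊗ₜ[k] one
  counit_mul : ∀ h h' : H, counit (mul h h') = counit h * counit h'
  counit_one : counit one = 1

/-- A Hom-Hopf algebra: a Hom-bialgebra with an antipode. -/
structure HomHopf (k : Type*) [Field k] (H : Type*) [AddCommGroup H] [Module k H]
    extends HomBialgebra k H where
  antipode : H →ₗ[k] H
  antipode_left : ∀ h : H,
    TensorProduct.lift mul (TensorProduct.map antipode (LinearMap.id : H →ₗ[k] H) (comul h))
      = counit h • one
  antipode_right : ∀ h : H,
    TensorProduct.lift mul (TensorProduct.map (LinearMap.id : H →ₗ[k] H) antipode (comul h))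
      = counit h • one
  antipode_auto : ∀ h : H, antipode (auto h) = auto (antipode h)

/-- A quasitriangular Hom-Hopf algebra `(H, α, R)`. -/
structure QTHomHopf (k : Type*) [Field k] (H : Type*) [AddCommGroup H] [Module k H]
    extends HomHopf k H where
  R : H ⊗[k] H
  qha1a : TensorProduct.lid k H (TensorProduct.map counit (LinearMap.id : H →ₗ[k] H) R) = one
  qha1b : TensorProduct.rid k H (TensorProduct.map (LinearMap.id : H →ₗ[k] H) counit R) = one
  qha2 : TensorProduct.map comul auto.toLinearMap R
      = TensorProduct.map (TensorProduct.map auto.toLinearMap auto.toLinearMap)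
          (TensorProduct.lift mul)
          (TensorProduct.tensorTensorTensorComm k H H H H (R ⊗ₜ[k] R))
  qha3 : TensorProduct.map auto.toLinearMap comul R
      = TensorProduct.map (TensorProduct.lift mul)
          ((TensorProduct.comm k H H).toLinearMap ∘ₗ
            TensorProduct.map auto.toLinearMap auto.toLinearMap)
          (TensorProduct.tensorTensorTensorComm k H H H H (R ⊗ₜ[k] R))
  qha4 : ∀ h : H,
    TensorProduct.map (TensorProduct.lift mul) (TensorProduct.lift mul)
        (TensorProduct.tensorTensorTensorComm k H H H H
          ((TensorProduct.comm k H H (comul h)) ⊗ₜ[k] R))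
      = TensorProduct.map (TensorProduct.lift mul) (TensorProduct.lift mul)
          (TensorProduct.tensorTensorTensorComm k H H H H (R ⊗ₜ[k] comul h))
  qha5 : TensorProduct.map auto.toLinearMap auto.toLinearMap R = R

/-- Triangularity: `R⁻¹ = R² ⊗ R¹`, i.e. `r²R¹ ⊗ r¹R² = 1 ⊗ 1`. -/
def QTHomHopf.IsTriangular {k : Type*} [Field k] {H : Type*} [AddCommGroup H] [Module k H]
    (HQ : QTHomHopf k H) : Prop :=
  TensorProduct.map (TensorProduct.lift HQ.mul) (TensorProduct.lift HQ.mul)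
      (TensorProduct.tensorTensorTensorComm k H H H H
        ((TensorProduct.comm k H H HQ.R) ⊗ₜ[k] HQ.R))
    = HQ.one ⊗ₜ[k] HQ.one

/-- A coquasitriangular Hom-Hopf algebra `(B, β, ⟨|⟩)`. -/
structure CQTHomHopf (k : Type*) [Field k] (B : Type*) [AddCommGroup B] [Module k B]
    extends HomHopf k B where
  form : B →ₗ[k] B →ₗ[k] k
  cha1 : ∀ h g l : B, form (mul h g) (auto l)
      = LinearMap.mul' k k (TensorProduct.map (form (auto g)) (form (auto h)) (comul l))
  cha2 : ∀ h g l : B, form (auto h) (mul g l)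
      = LinearMap.mul' k k
          (TensorProduct.map (form.flip (auto g)) (form.flip (auto l)) (comul h))
  cha3 : ∀ h g : B,
    TensorProduct.lid k B (TensorProduct.map (TensorProduct.lift form)
        ((TensorProduct.lift mul) ∘ₗ (TensorProduct.comm k B B).toLinearMap)
        (TensorProduct.tensorTensorTensorComm k B B B B (comul h ⊗ₜ[k] comul g)))
      = TensorProduct.rid k B
          (TensorProduct.map (TensorProduct.lift mul) (TensorProduct.lift form)
            (TensorProduct.tensorTensorTensorComm k B B B B (comul h ⊗ₜ[k] comul g)))
  cha4a : ∀ h : B, form one h = counit h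
  cha4b : ∀ h : B, form h one = counit h
  cha5 : ∀ h g : B, form (auto h) (auto g) = form h g

/-- Cotriangularity: `⟨h₁|g₁⟩⟨g₂|h₂⟩ = ε(h)ε(g)`. -/
def CQTHomHopf.IsCotriangular {k : Type*} [Field k] {B : Type*} [AddCommGroup B] [Module k B]
    (BC : CQTHomHopf k B) : Prop :=
  ∀ h g : B,
    LinearMap.mul' k k (TensorProduct.map (TensorProduct.lift BC.form)
        ((TensorProduct.lift BC.form) ∘ₗ (TensorProduct.comm k B B).toLinearMap)
        (TensorProduct.tensorTensorTensorComm k B B B B (BC.comul h ⊗ₜ[k] BC.comul g)))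
      = BC.counit h * BC.counit g

/-- A left Hom-module over a Hom-bialgebra `(H, α)`. -/
structure HomModule {k : Type*} [Field k] {H : Type*} [AddCommGroup H] [Module k H]
    (HA : HomBialgebra k H) (M : Type*) [AddCommGroup M] [Module k M] where
  act : H →ₗ[k] M →ₗ[k] M
  auto : M ≃ₗ[k] M
  auto_act : ∀ (h : H) (m : M), auto (act h m) = act (HA.auto h) (auto m)
  act_act : ∀ (h h' : H) (m : M), act (HA.auto h) (act h' m) = act (HA.mul h h') (auto m)
  one_act : ∀ m : M, act HA.one m = auto m

/-- A left Hom-comodule over a Hom-bialgebra `(B, β)`. -/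
structure HomComodule {k : Type*} [Field k] {B : Type*} [AddCommGroup B] [Module k B]
    (BA : HomBialgebra k B) (M : Type*) [AddCommGroup M] [Module k M] where
  coact : M →ₗ[k] B ⊗[k] M
  auto : M ≃ₗ[k] M
  coact_auto : ∀ m : M,
    coact (auto m) = TensorProduct.map BA.auto.toLinearMap auto.toLinearMap (coact m)
  counit_coact : ∀ m : M,
    TensorProduct.lid k M (TensorProduct.map BA.counit (LinearMap.id : M →ₗ[k] M) (coact m))
      = auto m
  hom_coassoc : ∀ m : M,
    TensorProduct.map BA.auto.toLinearMap coact (coact m)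
      = TensorProduct.assoc k B B M
          (TensorProduct.map BA.comul auto.toLinearMap (coact m))

/-- A Hom-algebra `(A, γ)`. -/
structure HomAlgebra (k : Type*) [Field k] (A : Type*) [AddCommGroup A] [Module k A] where
  mul : A →ₗ[k] A →ₗ[k] A
  one : A
  auto : A ≃ₗ[k] A
  auto_mul : ∀ a a' : A, auto (mul a a') = mul (auto a) (auto a')
  auto_one : auto one = one
  hom_assoc : ∀ a a' a'' : A, mul (auto a) (mul a' a'') = mul (mul a a') (auto a'')
  mul_one' : ∀ a : A, mul a one = auto a
  one_mul' : ∀ a : A, mul one a = auto a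

/-- A left Hom-module over a Hom-algebra `(A, γ)`. -/
structure HomModuleAlg {k : Type*} [Field k] {A : Type*} [AddCommGroup A] [Module k A]
    (AA : HomAlgebra k A) (M : Type*) [AddCommGroup M] [Module k M] where
  act : A →ₗ[k] M →ₗ[k] M
  auto : M ≃ₗ[k] M
  auto_act : ∀ (a : A) (m : M), auto (act a m) = act (AA.auto a) (auto m)
  act_act : ∀ (a a' : A) (m : M), act (AA.auto a) (act a' m) = act (AA.mul a a') (auto m)
  one_act : ∀ m : M, act AA.one m = auto m

/-- An `(H, B)`-Hom-Long dimodule. -/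
structure LongDimodule {k : Type*} [Field k] {H B : Type*}
    [AddCommGroup H] [Module k H] [AddCommGroup B] [Module k B]
    (HA : HomBialgebra k H) (BA : HomBialgebra k B)
    (M : Type*) [AddCommGroup M] [Module k M] where
  act : H →ₗ[k] M →ₗ[k] M
  coact : M →ₗ[k] B ⊗[k] M
  auto : M ≃ₗ[k] M
  auto_act : ∀ (h : H) (m : M), auto (act h m) = act (HA.auto h) (auto m)
  act_act : ∀ (h h' : H) (m : M), act (HA.auto h) (act h' m) = act (HA.mul h h') (auto m)
  one_act : ∀ m : M, act HA.one m = auto m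
  coact_auto : ∀ m : M,
    coact (auto m) = TensorProduct.map BA.auto.toLinearMap auto.toLinearMap (coact m)
  counit_coact : ∀ m : M,
    TensorProduct.lid k M (TensorProduct.map BA.counit (LinearMap.id : M →ₗ[k] M) (coact m))
      = auto m
  hom_coassoc : ∀ m : M,
    TensorProduct.map BA.auto.toLinearMap coact (coact m)
      = TensorProduct.assoc k B B M
          (TensorProduct.map BA.comul auto.toLinearMap (coact m))
  compat : ∀ (h : H) (m : M),
    coact (act h m)
      = TensorProduct.map BA.auto.toLinearMap (act (HA.auto h)) (coact m)

section Helpers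

variable {k H B M N : Type*} [Field k]
variable [AddCommGroup H] [Module k H] [AddCommGroup B] [Module k B]
variable [AddCommGroup M] [Module k M] [AddCommGroup N] [Module k N]

/-- The diagonal Hom-action on a tensor product: `h · (m ⊗ n) = h₁·m ⊗ h₂·n`. -/
noncomputable def tAct (comul : H →ₗ[k] H ⊗[k] H)
    (actM : H →ₗ[k] M →ₗ[k] M) (actN : H →ₗ[k] N →ₗ[k] N) :
    H →ₗ[k] (M ⊗[k] N) →ₗ[k] (M ⊗[k] N) :=
  TensorProduct.curry
    ((TensorProduct.map (TensorProduct.lift actM) (TensorProduct.lift actN)) ∘ₗ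
      (TensorProduct.tensorTensorTensorComm k H H M N).toLinearMap ∘ₗ
      (TensorProduct.map comul (LinearMap.id : M ⊗[k] N →ₗ[k] M ⊗[k] N)))

/-- The Hom-coaction on a tensor product: `ρ(m ⊗ n) = β⁻²(m₋₁ n₋₁) ⊗ (m₀ ⊗ n₀)`;
here `bInv2` stands for `β⁻²`. -/
noncomputable def tCoact (mulB : B →ₗ[k] B →ₗ[k] B) (bInv2 : B →ₗ[k] B)
    (coactM : M →ₗ[k] B ⊗[k] M) (coactN : N →ₗ[k] B ⊗[k] N) :
    (M ⊗[k] N) →ₗ[k] B ⊗[k] (M ⊗[k] N) :=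
  (TensorProduct.map (bInv2 ∘ₗ TensorProduct.lift mulB)
      (LinearMap.id : M ⊗[k] N →ₗ[k] M ⊗[k] N)) ∘ₗ
    (TensorProduct.tensorTensorTensorComm k B M B N).toLinearMap ∘ₗ
    (TensorProduct.map coactM coactN)

/-- `m ⊗ n ↦ R² · aM⁻¹(n) ⊗ R¹ · aN⁻¹(m)` (quasitriangular part of the Long braiding). -/
noncomputable def braidQT (R : H ⊗[k] H)
    (actM : H →ₗ[k] M →ₗ[k] M) (actN : H →ₗ[k] N →ₗ[k] N)
    (aM : M ≃ₗ[k] M) (aN : N ≃ₗ[k] N) : M ⊗[k] N →ₗ[k] N ⊗[k] M :=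
  TensorProduct.map (TensorProduct.lift actN) (TensorProduct.lift actM) ∘ₗ
    (TensorProduct.tensorTensorTensorComm k H H N M).toLinearMap ∘ₗ
    TensorProduct.mk k (H ⊗[k] H) (N ⊗[k] M) (TensorProduct.comm k H H R) ∘ₗ
    (TensorProduct.comm k M N).toLinearMap ∘ₗ
    TensorProduct.map aM.symm.toLinearMap aN.symm.toLinearMap

/-- `m ⊗ n ↦ ⟨m₋₁|n₋₁⟩ aN⁻¹(n₀) ⊗ aM⁻¹(m₀)` (coquasitriangular braiding). -/
noncomputable def braidCQT (form : B →ₗ[k] B →ₗ[k] k)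
    (coactM : M →ₗ[k] B ⊗[k] M) (coactN : N →ₗ[k] B ⊗[k] N)
    (aM : M ≃ₗ[k] M) (aN : N ≃ₗ[k] N) : M ⊗[k] N →ₗ[k] N ⊗[k] M :=
  (TensorProduct.comm k M N).toLinearMap ∘ₗ
    TensorProduct.map aM.symm.toLinearMap aN.symm.toLinearMap ∘ₗ
    (TensorProduct.lid k (M ⊗[k] N)).toLinearMap ∘ₗ
    TensorProduct.map (TensorProduct.lift form)
      (LinearMap.id : M ⊗[k] N →ₗ[k] M ⊗[k] N) ∘ₗ
    (TensorProduct.tensorTensorTensorComm k B M B N).toLinearMap ∘ₗ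
    TensorProduct.map coactM coactN

/-- The Long-dimodule braiding
`C(m ⊗ n) = ⟨m₋₁|n₋₁⟩ R² · aN⁻²(n₀) ⊗ R¹ · aM⁻²(m₀)`. -/
noncomputable def braidL (R : H ⊗[k] H) (form : B →ₗ[k] B →ₗ[k] k)
    (actM : H →ₗ[k] M →ₗ[k] M) (actN : H →ₗ[k] N →ₗ[k] N)
    (coactM : M →ₗ[k] B ⊗[k] M) (coactN : N →ₗ[k] B ⊗[k] N)
    (aM : M ≃ₗ[k] M) (aN : N ≃ₗ[k] N) : M ⊗[k] N →ₗ[k] N ⊗[k] M :=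
  braidQT R actM actN (aM.trans aM) (aN.trans aN) ∘ₗ
    (TensorProduct.lid k (M ⊗[k] N)).toLinearMap ∘ₗ
    TensorProduct.map (TensorProduct.lift form)
      (LinearMap.id : M ⊗[k] N →ₗ[k] M ⊗[k] N) ∘ₗ
    (TensorProduct.tensorTensorTensorComm k B M B N).toLinearMap ∘ₗ
    TensorProduct.map coactM coactN

/-- The action of `H ⊗ B` on a Long dimodule:
`(h ⊗ x) ⇀ m = ⟨x|m₋₁⟩ α⁻³(h) · μ⁻¹(m₀)`; `aInv3` stands for `α⁻³`, `muInv` for `μ⁻¹`. -/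
noncomputable def actHB (form : B →ₗ[k] B →ₗ[k] k) (aInv3 : H →ₗ[k] H)
    (act : H →ₗ[k] M →ₗ[k] M) (coact : M →ₗ[k] B ⊗[k] M) (muInv : M →ₗ[k] M) :
    (H ⊗[k] B) →ₗ[k] M →ₗ[k] M :=
  TensorProduct.curry
    ((TensorProduct.lid k M).toLinearMap ∘ₗ
      TensorProduct.map (TensorProduct.lift form)
        (TensorProduct.lift act ∘ₗ TensorProduct.map aInv3 muInv) ∘ₗ
      (TensorProduct.tensorTensorTensorComm k B H B M).toLinearMap ∘ₗ
      TensorProduct.map (TensorProduct.comm k H B).toLinearMap coact)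

/-- The coaction of `H ⊗ B` on a Long dimodule:
`ρ̄(m) = (R² ⊗ β⁻³(m₋₁)) ⊗ (R¹ · μ⁻¹(m₀))`; `bInv3` stands for `β⁻³`. -/
noncomputable def coactHB (R : H ⊗[k] H) (bInv3 : B →ₗ[k] B)
    (act : H →ₗ[k] M →ₗ[k] M) (coact : M →ₗ[k] B ⊗[k] M) (muInv : M →ₗ[k] M) :
    M →ₗ[k] (H ⊗[k] B) ⊗[k] M :=
  TensorProduct.map (TensorProduct.map (LinearMap.id : H →ₗ[k] H) bInv3)
      (TensorProduct.lift act ∘ₗ TensorProduct.map (LinearMap.id : H →ₗ[k] H) muInv) ∘ₗ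
    (TensorProduct.tensorTensorTensorComm k H H B M).toLinearMap ∘ₗ
    TensorProduct.mk k (H ⊗[k] H) (B ⊗[k] M) (TensorProduct.comm k H H R) ∘ₗ
    coact

end Helpers

section Assoc

variable {k U V W : Type*} [Field k]
variable [AddCommGroup U] [Module k U] [AddCommGroup V] [Module k V] [AddCommGroup W] [Module k W]

/-- The Hom-associator `(u ⊗ v) ⊗ w ↦ aU⁻¹(u) ⊗ (v ⊗ aW(w))`. -/
noncomputable def assocL (aU : U ≃ₗ[k] U) (aW : W ≃ₗ[k] W) :
    (U ⊗[k] V) ⊗[k] W →ₗ[k] U ⊗[k] (V ⊗[k] W) :=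
  TensorProduct.map aU.symm.toLinearMap
      (TensorProduct.map (LinearMap.id : V →ₗ[k] V) aW.toLinearMap) ∘ₗ
    (TensorProduct.assoc k U V W).toLinearMap

/-- The inverse Hom-associator `u ⊗ (v ⊗ w) ↦ (aU(u) ⊗ v) ⊗ aW⁻¹(w)`. -/
noncomputable def assocLinv (aU : U ≃ₗ[k] U) (aW : W ≃ₗ[k] W) :
    U ⊗[k] (V ⊗[k] W) →ₗ[k] (U ⊗[k] V) ⊗[k] W :=
  (TensorProduct.assoc k U V W).symm.toLinearMap ∘ₗ
    TensorProduct.map aU.toLinearMap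
      (TensorProduct.map (LinearMap.id : V →ₗ[k] V) aW.symm.toLinearMap)

end Assoc

section HomLongEq

variable {k M : Type*} [Field k] [AddCommGroup M] [Module k M]

/-- `F¹² = F ⊗ μ` on `M ⊗ (M ⊗ M)`. -/
noncomputable def f12 (μ : M ≃ₗ[k] M) (F : M ⊗[k] M →ₗ[k] M ⊗[k] M) :
    M ⊗[k] (M ⊗[k] M) →ₗ[k] M ⊗[k] (M ⊗[k] M) :=
  (TensorProduct.assoc k M M M).toLinearMap ∘ₗ
    TensorProduct.map F μ.toLinearMap ∘ₗ
    (TensorProduct.assoc k M M M).symm.toLinearMap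

/-- `F²³ = μ ⊗ F` on `M ⊗ (M ⊗ M)`. -/
noncomputable def f23 (μ : M ≃ₗ[k] M) (F : M ⊗[k] M →ₗ[k] M ⊗[k] M) :
    M ⊗[k] (M ⊗[k] M) →ₗ[k] M ⊗[k] (M ⊗[k] M) :=
  TensorProduct.map μ.toLinearMap F

/-- `F¹³ = (id ⊗ τ) ∘ (F ⊗ μ) ∘ (id ⊗ τ)` on `M ⊗ (M ⊗ M)`. -/
noncomputable def f13 (μ : M ≃ₗ[k] M) (F : M ⊗[k] M →ₗ[k] M ⊗[k] M) :
    M ⊗[k] (M ⊗[k] M) →ₗ[k] M ⊗[k] (M ⊗[k] M) :=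
  TensorProduct.map (LinearMap.id : M →ₗ[k] M) (TensorProduct.comm k M M).toLinearMap ∘ₗ
    f12 μ F ∘ₗ
    TensorProduct.map (LinearMap.id : M →ₗ[k] M) (TensorProduct.comm k M M).toLinearMap

/-- The cyclic permutation `τ⁽¹²³⁾ : x ⊗ y ⊗ z ↦ z ⊗ x ⊗ y`. -/
noncomputable def cyc123 (k M : Type*) [Field k] [AddCommGroup M] [Module k M] :
    M ⊗[k] (M ⊗[k] M) →ₗ[k] M ⊗[k] (M ⊗[k] M) :=
  (TensorProduct.comm k (M ⊗[k] M) M).toLinearMap ∘ₗ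
    (TensorProduct.assoc k M M M).symm.toLinearMap

end HomLongEq

section DualTensorAction

variable {k H B M : Type*} [Field k]
variable [AddCommGroup H] [Module k H] [AddCommGroup B] [Module k B]
variable [AddCommGroup M] [Module k M]
variable {HA : HomBialgebra k H} {BA : HomBialgebra k B}

/-- The action of `B* ⊗ H` on a Long dimodule: `(p ⊗ h) ⇁ m = p(m₋₁) (h · μ⁻¹(m₀))`. -/
noncomputable def dualTensorAct (LM : LongDimodule HA BA M) :
    (Module.Dual k B ⊗[k] H) →ₗ[k] M →ₗ[k] M :=
  TensorProduct.lift
    (LinearMap.mk₂ k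
      (fun (p : Module.Dual k B) (h : H) =>
        (TensorProduct.lid k M).toLinearMap ∘ₗ
          TensorProduct.map (p : B →ₗ[k] k) (LM.act h ∘ₗ LM.auto.symm.toLinearMap) ∘ₗ LM.coact)
      (fun p p' h => by
        ext m; simp [TensorProduct.map_add_left])
      (fun c p h => by
        ext m; simp [TensorProduct.map_smul_left])
      (fun p h h' => by
        ext m; simp [TensorProduct.map_add_right, LinearMap.add_comp])
      (fun c p h => by
        ext m; simp [TensorProduct.map_smul_right, LinearMap.smul_comp]))

theorem dualTensorAct_tmul (LM : LongDimodule HA BA M) (p : Module.Dual k B) (h : H) (m : M) :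
    dualTensorAct LM (p ⊗ₜ[k] h) m
      = TensorProduct.lid k M
          (TensorProduct.map (p : B →ₗ[k] k)
            (LM.act h ∘ₗ LM.auto.symm.toLinearMap) (LM.coact m)) := by
  simp [dualTensorAct]

theorem coact_auto_symm (LM : LongDimodule HA BA M) (m : M) :
    LM.coact (LM.auto.symm m)
      = TensorProduct.map BA.auto.symm.toLinearMap LM.auto.symm.toLinearMap (LM.coact m) := by
  have h := LM.coact_auto (LM.auto.symm m)
  rw [LinearEquiv.apply_symm_apply] at h
  rw [h, ← LinearMap.comp_apply, ← TensorProduct.map_comp]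
  simp

theorem auto_symm_act (LM : LongDimodule HA BA M) (h : H) (m : M) :
    LM.auto.symm (LM.act (HA.auto h) m) = LM.act h (LM.auto.symm m) := by
  rw [LinearEquiv.symm_apply_eq, LM.auto_act, LinearEquiv.apply_symm_apply]

/-- `ρ(g · μ⁻¹(n)) = n₋₁ ⊗ α(g) · μ⁻¹(n₀)`: in the Long condition, the twist `β` is cancelled by
the one coming from `μ⁻¹`. -/
theorem coact_act_auto_symm (LM : LongDimodule HA BA M) (g : H) (n : M) :
    LM.coact (LM.act g (LM.auto.symm n))
      = TensorProduct.map LinearMap.id (LM.act (HA.auto g) ∘ₗ LM.auto.symm.toLinearMap)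
          (LM.coact n) := by
  rw [LM.compat, coact_auto_symm, ← LinearMap.comp_apply, ← TensorProduct.map_comp]
  simp

/-- The functional `b ⊗ (b' ⊗ n) ↦ q(β⁻¹(b)) p(β⁻¹(b')) (x · μ⁻¹(n))`, through which both sides of
the Hom-associativity of `dualTensorAct` factor. -/
noncomputable def doubleContract (LM : LongDimodule HA BA M) (p q : Module.Dual k B) (x : H) :
    B ⊗[k] (B ⊗[k] M) →ₗ[k] M :=
  (TensorProduct.lid k M).toLinearMap ∘ₗ
    TensorProduct.map (q ∘ₗ BA.auto.symm.toLinearMap)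
      ((TensorProduct.lid k M).toLinearMap ∘ₗ
        TensorProduct.map (p ∘ₗ BA.auto.symm.toLinearMap)
          (LM.act x ∘ₗ LM.auto.symm.toLinearMap))

theorem doubleContract_tmul (LM : LongDimodule HA BA M) (p q : Module.Dual k B) (x : H)
    (b b' : B) (n : M) :
    doubleContract LM p q x (b ⊗ₜ[k] (b' ⊗ₜ[k] n))
      = q (BA.auto.symm b) • p (BA.auto.symm b') • LM.act x (LM.auto.symm n) := by
  simp [doubleContract, smul_comm (p _) (q _)]

/-- The iterated action `γ(p ⊗ h) ⇁ ((q ⊗ g) ⇁ m)` as a contraction of `β(m₋₁) ⊗ ρ(m₀)`. -/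
theorem dualTensorAct_iterate (LM : LongDimodule HA BA M) (p q : Module.Dual k B) (h g : H)
    (m : M) :
    dualTensorAct LM ((p ∘ₗ BA.auto.symm.toLinearMap) ⊗ₜ[k] HA.auto h)
        (dualTensorAct LM (q ⊗ₜ[k] g) m)
      = doubleContract LM p q (HA.mul h g)
          (TensorProduct.map BA.auto.toLinearMap LM.coact (LM.coact m)) := by
  rw [dualTensorAct_tmul LM q g m]
  induction LM.coact m using TensorProduct.induction_on with
  | zero => simp
  | add x y hx hy => simp only [map_add, hx, hy]
  | tmul b n =>
    simp only [TensorProduct.map_tmul, TensorProduct.lid_tmul, map_smul, LinearMap.comp_apply,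
      LinearEquiv.coe_coe, dualTensorAct_tmul, coact_act_auto_symm]
    induction LM.coact n using TensorProduct.induction_on with
    | zero => simp
    | add x y hx hy => simp only [map_add, smul_add, TensorProduct.tmul_add, hx, hy]
    | tmul b' n' =>
      simp [doubleContract_tmul, auto_symm_act, LM.act_act]

/-- The action of the product `(p ⊗ h)(q ⊗ g) = (q ∗ p) ⊗ hg` on `μ(m)` as a contraction of
`Δ(m₋₁) ⊗ μ(m₀)`. -/
theorem dualTensorAct_mul_auto (LM : LongDimodule HA BA M) (p q : Module.Dual k B) (x : H)
    (m : M) :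
    dualTensorAct LM
        ((LinearMap.mul' k k ∘ₗ
            TensorProduct.map
              (q ∘ₗ BA.auto.symm.toLinearMap ∘ₗ BA.auto.symm.toLinearMap)
              (p ∘ₗ BA.auto.symm.toLinearMap ∘ₗ BA.auto.symm.toLinearMap) ∘ₗ
            BA.comul) ⊗ₜ[k] x) (LM.auto m)
      = doubleContract LM p q x
          (TensorProduct.assoc k B B M
            (TensorProduct.map BA.comul LM.auto.toLinearMap (LM.coact m))) := by
  rw [dualTensorAct_tmul, LM.coact_auto]
  induction LM.coact m using TensorProduct.induction_on with
  | zero => simp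
  | add x y hx hy => simp only [map_add, hx, hy]
  | tmul b n =>
    simp only [TensorProduct.map_tmul, TensorProduct.lid_tmul, LinearMap.comp_apply,
      LinearEquiv.coe_coe, LinearEquiv.symm_apply_apply, BA.comul_auto]
    induction BA.comul b using TensorProduct.induction_on with
    | zero => simp
    | add x y hx hy => simp only [map_add, add_smul, TensorProduct.add_tmul, hx, hy]
    | tmul b₁ b₂ =>
      simp [doubleContract_tmul, mul_smul]

theorem auto_dualTensorAct (LM : LongDimodule HA BA M) (p : Module.Dual k B) (h : H) (m : M) :
    LM.auto (dualTensorAct LM (p ⊗ₜ[k] h) m)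
      = dualTensorAct LM ((p ∘ₗ BA.auto.symm.toLinearMap) ⊗ₜ[k] HA.auto h) (LM.auto m) := by
  rw [dualTensorAct_tmul, dualTensorAct_tmul, LM.coact_auto]
  induction LM.coact m using TensorProduct.induction_on with
  | zero => simp
  | add x y hx hy => simp only [map_add, hx, hy]
  | tmul b n => simp [LM.auto_act]

theorem dualTensorAct_one (LM : LongDimodule HA BA M) (m : M) :
    dualTensorAct LM ((BA.counit : Module.Dual k B) ⊗ₜ[k] HA.one) m = LM.auto m := by
  have hid : LM.act HA.one ∘ₗ LM.auto.symm.toLinearMap = LinearMap.id := by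
    ext n
    simp [LM.one_act]
  rw [dualTensorAct_tmul, hid, LM.counit_coact]

end DualTensorAction

/-- an `(H,B)`-Hom-Long dimodule is a left Hom-module over the
Hom-algebra `A = B* ⊗ H` via `(p ⊗ h) ⇁ m = p(m₋₁) · (h · μ⁻¹(m₀))`. -/
theorem longDimodule_gives_homModule_over_dual_tensor
    {k H B M : Type*} [Field k]
    [AddCommGroup H] [Module k H] [AddCommGroup B] [Module k B]
    [AddCommGroup M] [Module k M]
    (HA : HomBialgebra k H) (BA : HomBialgebra k B)
    (AA : HomAlgebra k (Module.Dual k B ⊗[k] H))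
    (hmul : ∀ (p q : Module.Dual k B) (h g : H),
      AA.mul (p ⊗ₜ[k] h) (q ⊗ₜ[k] g)
        = (LinearMap.mul' k k ∘ₗ
            TensorProduct.map
              (q ∘ₗ BA.auto.symm.toLinearMap ∘ₗ BA.auto.symm.toLinearMap)
              (p ∘ₗ BA.auto.symm.toLinearMap ∘ₗ BA.auto.symm.toLinearMap) ∘ₗ
            BA.comul) ⊗ₜ[k] HA.mul h g)
    (hone : AA.one = (BA.counit : Module.Dual k B) ⊗ₜ[k] HA.one)
    (hauto : ∀ (p : Module.Dual k B) (h : H),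
      AA.auto (p ⊗ₜ[k] h) = (p ∘ₗ BA.auto.symm.toLinearMap) ⊗ₜ[k] HA.auto h)
    (LM : LongDimodule HA BA M) :
    ∃ MA : HomModuleAlg AA M,
      MA.auto = LM.auto ∧
      (∀ (p : Module.Dual k B) (h : H) (m : M),
        MA.act (p ⊗ₜ[k] h) m
          = TensorProduct.lid k M
              (TensorProduct.map (p : B →ₗ[k] k)
                (LM.act h ∘ₗ LM.auto.symm.toLinearMap) (LM.coact m))) := by
  refine ⟨{ act := dualTensorAct LM, auto := LM.auto, auto_act := ?_, act_act := ?_,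
            one_act := ?_ }, rfl, dualTensorAct_tmul LM⟩
  · intro a m
    induction a using TensorProduct.induction_on with
    | zero => simp
    | add x y hx hy => simp only [map_add, LinearMap.add_apply, hx, hy]
    | tmul p h => rw [hauto, auto_dualTensorAct]
  · intro a a' m
    induction a using TensorProduct.induction_on with
    | zero => simp
    | add x y hx hy => simp only [map_add, LinearMap.add_apply, hx, hy]
    | tmul p h =>
      induction a' using TensorProduct.induction_on with
      | zero => simp
      | add x y hx hy => simp only [map_add, LinearMap.add_apply, hx, hy]
      | tmul q g =>
        rw [hauto, hmul, dualTensorAct_iterate, dualTensorAct_mul_auto, LM.hom_coassoc]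
  · intro m
    rw [hone, dualTensorAct_one]
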